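/- arXiv:math/0002135 — 3 statements merged into one kernel-verified Lean document; each statement's English description precedes it below -/
import Mathlib

section
/- Fix z, z' ∈ ℂ. Define linear operators U, D, L on the space of finitely supported complex-valued functions on the set of all partitions (with basis {δ_λ}) by: U δ_λ = Σ_{μ = λ+□} (z + c(□)) δ_μ, where the sum is over all partitions μ obtained from λ by adding one square □; D δ_λ = Σ_{μ = λ−□} (z' + c(□)) δ_μ, where the sum is over all partitions μ obtained from λ by removing one square □; and L δ_λ = (zz' + 2|λ|) δ_λ. Then these operators satisfy the sl(2) commutation relation D∘U − U∘D = L. -/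
open scoped Classical

noncomputable section

/-- The content of a cell `c = (i, j)` (0-indexed row `i` and column `j`) of a Young diagram:
`c(□) = column(□) - row(□)`. -/
def cellContent (c : ℕ × ℕ) : ℤ := (c.2 : ℤ) - (c.1 : ℤ)

/-- The hook length of the cell `c = (i, j)` of the Young diagram `Y`:
`h(□) = λ_i - j + λ'_j - i - 1` in 0-indexed coordinates. -/
def hookLen (Y : YoungDiagram) (c : ℕ × ℕ) : ℕ :=
  (Y.rowLen c.1 - c.2) + (Y.colLen c.2 - c.1) - 1

/-- The product `Π_{□ ∈ λ} (z + c(□)) (z' + c(□)) / h(□)²`. -/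
def zWeight (z z' : ℂ) (Y : YoungDiagram) : ℂ :=
  ∏ c ∈ Y.cells, ((z + cellContent c) * (z' + cellContent c) / (hookLen Y c : ℂ) ^ 2)

/-- The finset of squares addable to the Young diagram `Y`: cells `c ∉ Y` such that
adding `c` to `Y` again yields a Young diagram, i.e. every strictly smaller cell
(in the product order) already belongs to `Y`.  Any such cell has the form
`(i, Y.rowLen i)` for some `i ≤ Y.colLen 0`. -/
def addables (Y : YoungDiagram) : Finset (ℕ × ℕ) :=
  ((Finset.range (Y.colLen 0 + 1)).image fun i => (i, Y.rowLen i)).filter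
    fun c => ∀ d : ℕ × ℕ, d ≤ c → d ≠ c → d ∈ Y.cells

/-- Add a square to a Young diagram (when the result is again a Young diagram;
junk value `Y` otherwise). -/
def addBox (Y : YoungDiagram) (c : ℕ × ℕ) : YoungDiagram :=
  if h : c ∉ Y.cells ∧ ∀ d : ℕ × ℕ, d ≤ c → d ≠ c → d ∈ Y.cells then
    { cells := insert c Y.cells,
      isLowerSet := by
        intro a b hba ha
        simp only [Finset.coe_insert, Set.mem_insert_iff, Finset.mem_coe] at ha ⊢
        rcases ha with rfl | ha
        · by_cases hbc : b = a
          · exact Or.inl hbc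
          · exact Or.inr (h.2 b hba hbc)
        · exact Or.inr (Y.isLowerSet hba ha) }
  else Y

/-- The finset of squares removable from the Young diagram `Y`: the corners of `Y`. -/
def removables (Y : YoungDiagram) : Finset (ℕ × ℕ) :=
  Y.cells.filter fun c => (c.1 + 1, c.2) ∉ Y.cells ∧ (c.1, c.2 + 1) ∉ Y.cells

/-- Remove a square from a Young diagram (when the result is again a Young diagram;
junk value `Y` otherwise). -/
def removeBox (Y : YoungDiagram) (c : ℕ × ℕ) : YoungDiagram :=
  if h : (c.1 + 1, c.2) ∉ Y.cells ∧ (c.1, c.2 + 1) ∉ Y.cells then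
    { cells := Y.cells.erase c,
      isLowerSet := by
        intro a b hba ha
        rw [Finset.coe_erase, Set.mem_diff] at ha ⊢
        refine ⟨Y.isLowerSet hba ha.1, ?_⟩
        rintro rfl
        rcases lt_or_eq_of_le hba with hlt | rfl
        · rcases Prod.lt_iff.mp hlt with ⟨h1, h2⟩ | ⟨h1, h2⟩
          · exact h.1 (Y.isLowerSet (Prod.mk_le_mk.mpr ⟨h1, h2⟩) ha.1)
          · exact h.2 (Y.isLowerSet (Prod.mk_le_mk.mpr ⟨h1, h2⟩) ha.1)
        · exact ha.2 rfl }
  else Y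


/-- Kerov's raising operator `U` on the space of finitely supported complex functions on
partitions: `U δ_λ = Σ_{μ = λ+□} (z + c(□)) δ_μ`. -/
def kerovU (z : ℂ) (f : YoungDiagram →₀ ℂ) : YoungDiagram →₀ ℂ :=
  f.sum fun Y a => ∑ c ∈ addables Y, Finsupp.single (addBox Y c) ((z + cellContent c) * a)

/-- Kerov's lowering operator `D`:  `D δ_λ = Σ_{μ = λ−□} (z' + c(□)) δ_μ`. -/
def kerovD (z' : ℂ) (f : YoungDiagram →₀ ℂ) : YoungDiagram →₀ ℂ :=
  f.sum fun Y a => ∑ c ∈ removables Y, Finsupp.single (removeBox Y c) ((z' + cellContent c) * a)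

/-- Kerov's operator `L`:  `L δ_λ = (zz' + 2|λ|) δ_λ`. -/
def kerovL (z z' : ℂ) (f : YoungDiagram →₀ ℂ) : YoungDiagram →₀ ℂ :=
  f.sum fun Y a => Finsupp.single Y ((z * z' + 2 * (Y.card : ℂ)) * a)

/-!
The addable boxes of `λ` are the minimal elements of its complement and the removable ones its
maximal elements. Adding `c` and removing `d ≠ c` commute, and either order is possible exactly when
`c` is addable to `λ`, `d` is removable from `λ` and `¬d ≤ c`. Hence, whatever the weights `w` of
the raising and `w'` of the lowering operator, the off-diagonal terms of the commutator cancel, and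
its eigenvalue at `λ` is the sum of `w w'` over the addable minus that over the removable boxes.

When `w w'` is a function `f` of the content `x`, telescoping along the rows of `λ` turns this
eigenvalue into `f(0)` plus the sum over all boxes of the second difference
`f(x + 1) - 2 f(x) + f(x - 1)`, which is constantly `2` for `f(x) = (z + x)(z' + x)`.
-/

section Boxes

variable {Y : YoungDiagram} {c d : ℕ × ℕ}

theorem minimal_notMem_youngDiagram_iff :
    Minimal (· ∉ Y) c ↔ c ∉ Y.cells ∧ ∀ d : ℕ × ℕ, d ≤ c → d ≠ c → d ∈ Y.cells := by
  simp only [minimal_iff_forall_lt, not_not, lt_iff_le_and_ne, and_imp, YoungDiagram.mem_cells]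

theorem maximal_mem_youngDiagram_iff :
    Maximal (· ∈ Y) c ↔ c ∈ Y ∧ (c.1 + 1, c.2) ∉ Y ∧ (c.1, c.2 + 1) ∉ Y := by
  rw [maximal_iff_forall_gt]
  refine and_congr_right fun _ => ⟨fun h => ⟨h ?_, h ?_⟩, ?_⟩
  · exact Prod.lt_iff.mpr (.inl ⟨c.1.lt_succ_self, le_rfl⟩)
  · exact Prod.lt_iff.mpr (.inr ⟨le_rfl, c.2.lt_succ_self⟩)
  · rintro ⟨hdown, hright⟩ d hlt hd
    rcases Prod.lt_iff.mp hlt with ⟨h₁, h₂⟩ | ⟨h₁, h₂⟩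
    · exact hdown (Y.up_left_mem h₁ h₂ hd)
    · exact hright (Y.up_left_mem h₁ h₂ hd)

theorem rowLen_pos_iff {i : ℕ} : 0 < Y.rowLen i ↔ i < Y.colLen 0 := by
  rw [← YoungDiagram.mem_iff_lt_rowLen, YoungDiagram.mem_iff_lt_colLen]

theorem mem_addables_iff_minimal : c ∈ addables Y ↔ Minimal (· ∉ Y) c := by
  rw [minimal_notMem_youngDiagram_iff, addables, Finset.mem_filter]
  refine and_congr_left fun hbelow => ?_
  obtain ⟨i, j⟩ := c
  simp only [Finset.mem_image, Finset.mem_range, Prod.mk.injEq, YoungDiagram.mem_cells,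
    YoungDiagram.mem_iff_lt_rowLen]
  constructor
  · rintro ⟨_, _, rfl, rfl⟩
    exact lt_irrefl _
  · intro hj
    refine ⟨i, ?_, rfl, ?_⟩
    · by_contra hi
      have hmem : (i - 1, 0) ∈ Y :=
        hbelow _ (Prod.mk_le_mk.mpr ⟨i.pred_le, j.zero_le⟩) (by grind)
      have := YoungDiagram.mem_iff_lt_colLen.mp hmem
      omega
    · by_contra hne
      have hmem : (i, Y.rowLen i) ∈ Y :=
        hbelow _ (Prod.mk_le_mk.mpr ⟨le_rfl, not_lt.mp hj⟩) (by grind)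
      exact lt_irrefl _ (YoungDiagram.mem_iff_lt_rowLen.mp hmem)

theorem mem_removables_iff_maximal : c ∈ removables Y ↔ Maximal (· ∈ Y) c := by
  rw [maximal_mem_youngDiagram_iff, removables, Finset.mem_filter]
  rfl

theorem mem_addBox (hc : c ∈ addables Y) : d ∈ addBox Y c ↔ d = c ∨ d ∈ Y := by
  rw [mem_addables_iff_minimal, minimal_notMem_youngDiagram_iff] at hc
  rw [← YoungDiagram.mem_cells, addBox, dif_pos hc, Finset.mem_insert, YoungDiagram.mem_cells]

theorem mem_removeBox (hc : c ∈ removables Y) : d ∈ removeBox Y c ↔ d ≠ c ∧ d ∈ Y := by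
  rw [removables, Finset.mem_filter] at hc
  rw [← YoungDiagram.mem_cells, removeBox, dif_pos hc.2, Finset.mem_erase, YoungDiagram.mem_cells]

theorem mem_removables_addBox (hc : c ∈ addables Y) :
    d ∈ removables (addBox Y c) ↔ d = c ∨ d ∈ removables Y ∧ ¬d ≤ c := by
  have hcmin := mem_addables_iff_minimal.mp hc
  simp only [mem_removables_iff_maximal, maximal_iff, mem_addBox hc]
  constructor
  · rintro ⟨rfl | hd, hmax⟩
    · exact .inl rfl
    · refine .inr ⟨⟨hd, fun e he hde => hmax (.inr he) hde⟩, fun hdc => hcmin.1 ?_⟩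
      exact hmax (.inl rfl) hdc ▸ hd
  · rintro (rfl | ⟨⟨hd, hmax⟩, hdc⟩)
    · refine ⟨.inl rfl, ?_⟩
      rintro e (rfl | he) hde
      · rfl
      · exact absurd (Y.isLowerSet hde he) hcmin.1
    · refine ⟨.inr hd, ?_⟩
      rintro e (rfl | he) hde
      · exact absurd hde hdc
      · exact hmax he hde

theorem mem_addables_removeBox (hd : d ∈ removables Y) :
    c ∈ addables (removeBox Y d) ↔ c = d ∨ c ∈ addables Y ∧ ¬d ≤ c := by
  have hdmax := mem_removables_iff_maximal.mp hd
  simp only [mem_addables_iff_minimal, minimal_iff, mem_removeBox hd, not_and_or, not_not]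
  constructor
  · rintro ⟨rfl | hc, hmin⟩
    · exact .inl rfl
    · refine .inr ⟨⟨hc, fun e he hec => hmin (.inr he) hec⟩, fun hdc => hc ?_⟩
      exact hmin (.inl rfl) hdc ▸ hdmax.1
  · rintro (rfl | ⟨⟨hc, hmin⟩, hdc⟩)
    · refine ⟨.inl rfl, ?_⟩
      rintro e (rfl | he) hec
      · rfl
      · exact absurd (Y.isLowerSet hec hdmax.1) he
    · refine ⟨.inr hc, ?_⟩
      rintro e (rfl | he) hec
      · exact absurd hec hdc
      · exact hmin he hec

theorem removables_addBox (hc : c ∈ addables Y) :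
    removables (addBox Y c) = insert c {d ∈ removables Y | ¬d ≤ c} := by
  ext d
  rw [mem_removables_addBox hc, Finset.mem_insert, Finset.mem_filter]

theorem addables_removeBox (hd : d ∈ removables Y) :
    addables (removeBox Y d) = insert d {c ∈ addables Y | ¬d ≤ c} := by
  ext c
  rw [mem_addables_removeBox hd, Finset.mem_insert, Finset.mem_filter]

theorem removeBox_addBox_self (hc : c ∈ addables Y) : removeBox (addBox Y c) c = Y := by
  have hcY : c ∉ Y := (mem_addables_iff_minimal.mp hc).1
  ext e
  simp only [YoungDiagram.mem_cells]
  rw [mem_removeBox ((mem_removables_addBox hc).mpr (.inl rfl)), mem_addBox hc]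
  grind

theorem addBox_removeBox_self (hd : d ∈ removables Y) : addBox (removeBox Y d) d = Y := by
  have hdY : d ∈ Y := (mem_removables_iff_maximal.mp hd).1
  ext e
  simp only [YoungDiagram.mem_cells]
  rw [mem_addBox ((mem_addables_removeBox hd).mpr (.inl rfl)), mem_removeBox hd]
  grind

theorem removeBox_addBox_comm (hc : c ∈ addables Y) (hd : d ∈ removables Y) (hdc : ¬d ≤ c) :
    removeBox (addBox Y c) d = addBox (removeBox Y d) c := by
  have hne : c ≠ d := fun h => hdc h.ge
  ext e
  simp only [YoungDiagram.mem_cells]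
  rw [mem_removeBox ((mem_removables_addBox hc).mpr (.inr ⟨hd, hdc⟩)), mem_addBox hc,
    mem_addBox ((mem_addables_removeBox hd).mpr (.inr ⟨hc, hdc⟩)), mem_removeBox hd]
  rcases eq_or_ne e c with rfl | hec
  · simp [hne]
  · simp [hec]

end Boxes

section Operators

variable {R : Type*} [CommRing R]

/-- The operator `δ_λ ↦ Σ_{μ = λ+□} w(□) δ_μ` adding a box with weight `w`; Kerov's `U` is the case
`w(□) = z + c(□)`. -/
def boxAdd (w : ℕ × ℕ → R) : Module.End R (YoungDiagram →₀ R) :=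
  Finsupp.linearCombination R fun Y => ∑ c ∈ addables Y, Finsupp.single (addBox Y c) (w c)

/-- The operator `δ_λ ↦ Σ_{μ = λ−□} w(□) δ_μ` removing a box with weight `w`; Kerov's `D` is the
case `w(□) = z' + c(□)`. -/
def boxRemove (w : ℕ × ℕ → R) : Module.End R (YoungDiagram →₀ R) :=
  Finsupp.linearCombination R fun Y => ∑ c ∈ removables Y, Finsupp.single (removeBox Y c) (w c)

/-- The diagonal operator `δ_λ ↦ a(λ) δ_λ`; Kerov's `L` is the case `a(λ) = zz' + 2|λ|`. -/
def diagonalOp (a : YoungDiagram → R) : Module.End R (YoungDiagram →₀ R) :=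
  Finsupp.linearCombination R fun Y => Finsupp.single Y (a Y)

theorem boxAdd_single (w : ℕ × ℕ → R) (Y : YoungDiagram) (a : R) :
    boxAdd w (Finsupp.single Y a) =
      ∑ c ∈ addables Y, Finsupp.single (addBox Y c) (a * w c) := by
  simp only [boxAdd, Finsupp.linearCombination_single, Finset.smul_sum, Finsupp.smul_single,
    smul_eq_mul]

theorem boxRemove_single (w : ℕ × ℕ → R) (Y : YoungDiagram) (a : R) :
    boxRemove w (Finsupp.single Y a) =
      ∑ d ∈ removables Y, Finsupp.single (removeBox Y d) (a * w d) := by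
  simp only [boxRemove, Finsupp.linearCombination_single, Finset.smul_sum, Finsupp.smul_single,
    smul_eq_mul]

theorem boxRemove_boxAdd_single (w w' : ℕ × ℕ → R) (Y : YoungDiagram) :
    boxRemove w' (boxAdd w (Finsupp.single Y 1)) =
      Finsupp.single Y (∑ c ∈ addables Y, w c * w' c) +
        ∑ c ∈ addables Y, ∑ d ∈ removables Y with ¬d ≤ c,
          Finsupp.single (addBox (removeBox Y d) c) (w c * w' d) := by
  simp only [boxAdd_single, map_sum, boxRemove_single, one_mul]
  rw [Finsupp.single_finsetSum, ← Finset.sum_add_distrib]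
  refine Finset.sum_congr rfl fun c hc => ?_
  rw [removables_addBox hc, Finset.sum_insert (by simp), removeBox_addBox_self hc]
  congr 1
  refine Finset.sum_congr rfl fun d hd => ?_
  obtain ⟨hd, hdc⟩ := Finset.mem_filter.mp hd
  rw [removeBox_addBox_comm hc hd hdc]

theorem boxAdd_boxRemove_single (w w' : ℕ × ℕ → R) (Y : YoungDiagram) :
    boxAdd w (boxRemove w' (Finsupp.single Y 1)) =
      Finsupp.single Y (∑ d ∈ removables Y, w d * w' d) +
        ∑ d ∈ removables Y, ∑ c ∈ addables Y with ¬d ≤ c,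
          Finsupp.single (addBox (removeBox Y d) c) (w c * w' d) := by
  simp only [boxRemove_single, map_sum, boxAdd_single, one_mul, mul_comm (w' _)]
  rw [Finsupp.single_finsetSum, ← Finset.sum_add_distrib]
  refine Finset.sum_congr rfl fun d hd => ?_
  rw [addables_removeBox hd, Finset.sum_insert (by simp), addBox_removeBox_self hd]

theorem lie_boxRemove_boxAdd (w w' : ℕ × ℕ → R) :
    ⁅boxRemove w', boxAdd w⁆ =
      diagonalOp fun Y => ∑ c ∈ addables Y, w c * w' c - ∑ c ∈ removables Y, w c * w' c := by
  refine Finsupp.lhom_ext' fun Y => LinearMap.ext_ring ?_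
  have swap : ∑ c ∈ addables Y, ∑ d ∈ removables Y with ¬d ≤ c,
        Finsupp.single (addBox (removeBox Y d) c) (w c * w' d) =
      ∑ d ∈ removables Y, ∑ c ∈ addables Y with ¬d ≤ c,
        Finsupp.single (addBox (removeBox Y d) c) (w c * w' d) :=
    Finset.sum_comm' (by simp only [Finset.mem_filter]; tauto)
  rw [LinearMap.comp_apply, LinearMap.comp_apply, Finsupp.lsingle_apply,
    LieRing.of_associative_ring_bracket, LinearMap.sub_apply, Module.End.mul_apply,
    Module.End.mul_apply, boxRemove_boxAdd_single, boxAdd_boxRemove_single, swap,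
    add_sub_add_right_eq_sub, ← Finsupp.single_sub, diagonalOp, Finsupp.linearCombination_single,
    one_smul]

end Operators

section Rows

variable (Y : YoungDiagram)

/-- The (0-indexed) rows of `Y` ending in a removable box. Row `i` is such a row iff a box can be
added to row `i + 1`. -/
def cornerRows : Finset ℕ := {i ∈ Finset.range (Y.colLen 0) | Y.rowLen (i + 1) < Y.rowLen i}

variable {Y}

theorem mem_cornerRows {i : ℕ} : i ∈ cornerRows Y ↔ Y.rowLen (i + 1) < Y.rowLen i := by
  rw [cornerRows, Finset.mem_filter, Finset.mem_range, ← rowLen_pos_iff, and_iff_right_iff_imp]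
  exact Nat.zero_lt_of_lt

theorem mem_addables_mk {i j : ℕ} :
    (i, j) ∈ addables Y ↔ j = Y.rowLen i ∧ ∀ k < i, Y.rowLen i < Y.rowLen k := by
  simp only [mem_addables_iff_minimal, minimal_iff_forall_lt, not_not, Prod.forall, Prod.mk_lt_mk,
    YoungDiagram.mem_iff_lt_rowLen]
  constructor
  · rintro ⟨hj, hbelow⟩
    obtain rfl : j = Y.rowLen i := by
      refine (not_lt.mp hj).antisymm' (not_lt.mp fun hlt => ?_)
      exact lt_irrefl _ (hbelow i (Y.rowLen i) (.inr ⟨le_rfl, hlt⟩))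
    exact ⟨rfl, fun k hk => hbelow k _ (.inl ⟨hk, le_rfl⟩)⟩
  · rintro ⟨rfl, habove⟩
    refine ⟨lt_irrefl _, ?_⟩
    rintro k l (⟨hk, hl⟩ | ⟨hk, hl⟩)
    · exact hl.trans_lt (habove k hk)
    · exact hl.trans_le (Y.rowLen_anti k i hk)

theorem mem_addables_zero {j : ℕ} : (0, j) ∈ addables Y ↔ j = Y.rowLen 0 := by
  simp only [mem_addables_mk, Nat.not_lt_zero, false_imp_iff, implies_true, and_true]

theorem mem_addables_succ {i j : ℕ} :
    (i + 1, j) ∈ addables Y ↔ i ∈ cornerRows Y ∧ j = Y.rowLen (i + 1) := by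
  rw [mem_addables_mk, mem_cornerRows, and_comm]
  refine and_congr_left fun _ => ⟨fun h => h i i.lt_succ_self, fun h k hk => ?_⟩
  exact h.trans_le (Y.rowLen_anti k i (Nat.le_of_lt_succ hk))

theorem mem_removables_mk {i j : ℕ} :
    (i, j) ∈ removables Y ↔ i ∈ cornerRows Y ∧ j = Y.rowLen i - 1 := by
  simp only [mem_removables_iff_maximal, maximal_mem_youngDiagram_iff, mem_cornerRows,
    YoungDiagram.mem_iff_lt_rowLen]
  omega

variable (Y) {M : Type*} [AddCommMonoid M] (F : ℕ × ℕ → M)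

theorem sum_addables :
    ∑ c ∈ addables Y, F c =
      F (0, Y.rowLen 0) + ∑ i ∈ cornerRows Y, F (i + 1, Y.rowLen (i + 1)) := by
  have h : addables Y = insert (0, Y.rowLen 0)
      ((cornerRows Y).image fun i => (i + 1, Y.rowLen (i + 1))) := by
    ext ⟨_ | i, j⟩
    · simp [mem_addables_zero]
    · simp [mem_addables_succ, eq_comm]
  rw [h, Finset.sum_insert (by simp),
    Finset.sum_image fun _ _ _ _ hij => Nat.succ_injective (congrArg Prod.fst hij)]

theorem sum_removables :
    ∑ c ∈ removables Y, F c = ∑ i ∈ cornerRows Y, F (i, Y.rowLen i - 1) := by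
  have h : removables Y = (cornerRows Y).image fun i => (i, Y.rowLen i - 1) := by
    ext ⟨i, j⟩
    simp [mem_removables_mk, eq_comm]
  rw [h, Finset.sum_image fun _ _ _ _ hij => congrArg Prod.fst hij]

theorem sum_cells :
    ∑ c ∈ Y.cells, F c =
      ∑ i ∈ Finset.range (Y.colLen 0), ∑ j ∈ Finset.range (Y.rowLen i), F (i, j) := by
  refine Finset.sum_finset_product _ _ _ fun ⟨i, j⟩ => ?_
  simp only [Finset.mem_range, YoungDiagram.mem_cells, ← YoungDiagram.mem_iff_lt_rowLen,
    ← YoungDiagram.mem_iff_lt_colLen]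
  exact ⟨fun h => ⟨Y.up_left_mem le_rfl j.zero_le h, h⟩, And.right⟩

end Rows

section Contents

variable (Y : YoungDiagram) {M : Type*} [AddCommGroup M] (f : ℤ → M)

theorem sum_addables_sub_sum_removables_eq_sum_rows :
    ∑ c ∈ addables Y, f (cellContent c) - ∑ c ∈ removables Y, f (cellContent c) =
      f (Y.rowLen 0) + ∑ i ∈ Finset.range (Y.colLen 0),
        (f (Y.rowLen (i + 1) - (i + 1)) - f (Y.rowLen i - i - 1)) := by
  rw [sum_addables, sum_removables, add_sub_assoc, ← Finset.sum_sub_distrib, cornerRows,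
    Finset.sum_filter]
  refine congrArg₂ _ (by simp [cellContent]) (Finset.sum_congr rfl fun i _ => ?_)
  split_ifs with hlt
  · congr 2
    simp only [cellContent]
    omega
  · have heq : Y.rowLen (i + 1) = Y.rowLen i :=
      (Y.rowLen_anti i (i + 1) i.le_succ).antisymm (not_lt.mp hlt)
    rw [heq, sub_sub, sub_self]

theorem sum_row_second_difference (i m : ℕ) :
    ∑ j ∈ Finset.range m, (f (j - i + 1) - 2 • f (j - i) + f (j - i - 1)) =
      f (m - i) - f (m - i - 1) - (f (-i) - f (-i - 1)) := by
  induction m with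
  | zero => simp
  | succ m ih =>
    have hstep : ((m + 1 : ℕ) : ℤ) - i = m - i + 1 := by push_cast; ring
    rw [Finset.sum_range_succ, ih, hstep, add_sub_cancel_right]
    abel

theorem sum_addables_sub_sum_removables :
    ∑ c ∈ addables Y, f (cellContent c) - ∑ c ∈ removables Y, f (cellContent c) =
      f 0 + ∑ c ∈ Y.cells,
        (f (cellContent c + 1) - 2 • f (cellContent c) + f (cellContent c - 1)) := by
  have hlast : Y.rowLen (Y.colLen 0) = 0 :=
    Nat.eq_zero_of_not_pos fun h => lt_irrefl _ (rowLen_pos_iff.mp h)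
  let g (i : ℕ) : M := f (Y.rowLen i - i) - f (-i)
  have telescope : ∑ i ∈ Finset.range (Y.colLen 0), (g (i + 1) - g i) = f 0 - f (Y.rowLen 0) := by
    rw [Finset.sum_range_sub]
    simp [g, hlast]
  rw [sum_addables_sub_sum_removables_eq_sum_rows, sum_cells, ← sub_eq_iff_eq_add',
    add_sub_right_comm, ← neg_sub (f 0), ← telescope, neg_add_eq_iff_eq_add,
    ← Finset.sum_add_distrib]
  refine Finset.sum_congr rfl fun i _ => ?_
  have hneg : -((i : ℤ) + 1) = -i - 1 := by ring
  simp only [cellContent, sum_row_second_difference, g, Nat.cast_succ, hneg]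
  abel

theorem sum_addables_sub_sum_removables_content {R : Type*} [CommRing R] (z z' : R) :
    ∑ c ∈ addables Y, (z + cellContent c) * (z' + cellContent c) -
      ∑ c ∈ removables Y, (z + cellContent c) * (z' + cellContent c) =
      z * z' + 2 * Y.card := by
  have second_difference (x : ℤ) : (z + (x + 1 : ℤ)) * (z' + (x + 1 : ℤ)) -
      2 • ((z + x) * (z' + x)) + (z + (x - 1 : ℤ)) * (z' + (x - 1 : ℤ)) = 2 := by
    push_cast
    ring
  rw [sum_addables_sub_sum_removables Y fun x => (z + x) * (z' + x)]
  simp only [second_difference, Finset.sum_const, Int.cast_zero, add_zero]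
  rw [nsmul_eq_mul, mul_comm (_ : R) 2]

end Contents

theorem kerov_commutator_DU_general {R : Type*} [CommRing R] (z z' : R) :
    ⁅boxRemove fun c => z' + (cellContent c : R), boxAdd fun c => z + (cellContent c : R)⁆ =
      diagonalOp fun Y => z * z' + 2 * (Y.card : R) := by
  simp only [lie_boxRemove_boxAdd, sum_addables_sub_sum_removables_content]

theorem coe_boxAdd_content (z : ℂ) : ⇑(boxAdd fun c => z + cellContent c) = kerovU z := by
  funext f
  simp only [boxAdd, kerovU, Finsupp.linearCombination_apply, Finset.smul_sum, Finsupp.smul_single,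
    smul_eq_mul, mul_comm]

theorem coe_boxRemove_content (z' : ℂ) : ⇑(boxRemove fun c => z' + cellContent c) = kerovD z' := by
  funext f
  simp only [boxRemove, kerovD, Finsupp.linearCombination_apply, Finset.smul_sum,
    Finsupp.smul_single, smul_eq_mul, mul_comm]

theorem coe_diagonalOp_card (z z' : ℂ) :
    ⇑(diagonalOp fun Y => z * z' + 2 * (Y.card : ℂ)) = kerovL z z' := by
  funext f
  simp only [diagonalOp, kerovL, Finsupp.linearCombination_apply, Finsupp.smul_single, smul_eq_mul,
    mul_comm]

/-- The Kerov operators satisfy the `sl(2)` commutation relation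
`D∘U − U∘D = L`. -/
theorem kerov_commutator_DU (z z' : ℂ) :
    (kerovD z') ∘ (kerovU z) - (kerovU z) ∘ (kerovD z') = kerovL z z' := by
  rw [← coe_boxAdd_content, ← coe_boxRemove_content, ← coe_diagonalOp_card,
    ← kerov_commutator_DU_general]
  rfl

end
end

section
/- For all z, z' ∈ ℂ and all ξ ∈ ℂ with |ξ| < 1, the series Σ_λ ξ^{|λ|} Π_{□∈λ} (z + c(□))(z' + c(□)) / h(□)², summed over all partitions λ of all sizes, converges absolutely and equals (1 − ξ)^{−zz'} (principal branch). -/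
open scoped Classical

noncomputable section

/-!
Let `S_n(z, z')` be the sum of the weights over the partitions of `n`. Once `n! S_n = (zz')_n` is
known, the value of the series is the binomial series; absolute convergence follows from the case
`z' = conj z`, where all terms are nonnegative for `ξ ≥ 0`, because the weight at `(z, z')` is
bounded in norm by the sum of the weights at `(z, conj z)` and `(z', conj z')`.

Both sides of `n! S_n = (zz')_n` are polynomials in `z`, so `z` may be taken to be a natural number
`N`. Then only partitions with at most `N` rows contribute. In terms of their beta-numbers
`l_i = λ_i + N - 1 - i` the weight is, up to a constant, the Meixner weight
`Δ(l)² ∏ i, (c)_{l_i} / l_i!` with `c = z' + 1 - N`, where `Δ` is the Vandermonde determinant.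
With `e_i` the unit vectors, the identities
`∑ i, (c + l_i) Δ(l + e_i) = (∑ i, l_i + N c + N(N-1)/2) Δ(l)` and
`∑ i, l_i Δ(l - e_i) = (∑ i, l_i - N(N-1)/2) Δ(l)`, obtained by expanding the determinant in rising
and falling factorials, give two evaluations of the sum over all pairs `(l, l + e_i)`, hence
`(n + 1) S_{n+1} = (N z' + n) S_n`.
-/

open Finset Matrix Polynomial
open scoped Nat

section Vandermonde

variable {R : Type*} [CommRing R] {N : ℕ}

theorem sum_det_updateRow_mul {n : Type*} [Fintype n] [DecidableEq n] (M A : Matrix n n R) :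
    ∑ i, (M.updateRow i ((M * A) i)).det = A.trace * M.det := by
  calc ∑ i, (M.updateRow i ((M * A) i)).det
      = (M * A * M.adjugate).trace := by
        refine sum_congr rfl fun i _ => ?_
        rw [← cramer_transpose_apply, cramer_eq_adjugate_mulVec, ← adjugate_transpose,
          mulVec_transpose, diag_apply, mul_apply]
        rfl
    _ = A.trace * M.det := by
        rw [trace_mul_cycle, adjugate_mul, smul_mul, one_mul, trace_smul, smul_eq_mul, mul_comm]

theorem sum_mul_det_vandermonde_add_single (p : Fin N → R[X])
    (hdeg : ∀ j, (p j).natDegree = j) (hmonic : ∀ j, (p j).Monic) (u d x : Fin N → R) (s : R)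
    (hp : ∀ i j, u i * (p j).eval (x i + s) = (u i + d j) * (p j).eval (x i)) :
    ∑ i, u i * (vandermonde (x + Pi.single i s)).det
      = (∑ i, u i + ∑ j, d j) * (vandermonde x).det := by
  set M : Matrix (Fin N) (Fin N) R := Matrix.of fun i j => (p j).eval (x i) with hM
  have hdet (y : Fin N → R) := det_eval_matrixOfPolynomials_eq_det_vandermonde y p hdeg hmonic
  have hrow (i : Fin N) : u i * (vandermonde (x + Pi.single i s)).det
      = u i * M.det + (M.updateRow i ((M * diagonal d) i)).det := by
    have hupdate : Matrix.of (fun k j => (p j).eval ((x + Pi.single i s : Fin N → R) k))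
        = M.updateRow i fun j => (p j).eval (x i + s) := by
      ext k j
      obtain rfl | hk := eq_or_ne k i
      · simp
      · simp [hk, hM]
    have hself : u i * M.det = (M.updateRow i (u i • M i)).det := by
      rw [det_updateRow_smul, updateRow_eq_self]
    rw [hdet, hupdate, hself, ← det_updateRow_smul, ← det_updateRow_add]
    congr 2
    ext j
    simp only [Pi.smul_apply, Pi.add_apply, smul_eq_mul, mul_diagonal, hp, hM, of_apply]
    ring
  simp_rw [hrow, sum_add_distrib, sum_det_updateRow_mul, trace_diagonal, ← sum_mul]
  rw [hdet, ← hM]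
  ring

theorem sum_fin_val_cast {S : Type*} [Semiring S] (N : ℕ) :
    ∑ j : Fin N, ((j : ℕ) : S) = N.choose 2 := by
  rw [Fin.sum_univ_eq_sum_range fun j => (j : S), ← Nat.cast_sum, sum_range_id,
    Nat.choose_two_right]

variable [IsDomain R]

theorem sum_add_mul_det_vandermonde_add_single_one (c : R) (x : Fin N → R) :
    ∑ i, (c + x i) * (vandermonde (x + Pi.single i 1)).det
      = (∑ i, (c + x i) + N.choose 2) * (vandermonde x).det := by
  rw [← sum_fin_val_cast]
  refine sum_mul_det_vandermonde_add_single (fun j => (ascPochhammer R j).comp (X + C c))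
    (fun j => ?_) (fun j => (monic_ascPochhammer R j).comp_X_add_C c) _ _ x 1 fun i j => ?_
  · simp [natDegree_comp, ascPochhammer_natDegree]
  · have hleft : (ascPochhammer R (j + 1)).eval (c + x i)
        = (c + x i) * (ascPochhammer R j).eval (c + x i + 1) := by
      simp [ascPochhammer_succ_left]
    have hright := ascPochhammer_succ_eval (j : ℕ) (c + x i)
    simp only [eval_comp, eval_add, eval_X, eval_C]
    rw [show x i + 1 + c = c + x i + 1 by ring, ← hleft, hright, add_comm (x i) c, mul_comm]

theorem sum_mul_det_vandermonde_sub_single_one (x : Fin N → R) :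
    ∑ i, x i * (vandermonde (x - Pi.single i 1)).det
      = (∑ i, x i - N.choose 2) * (vandermonde x).det := by
  simp only [← sum_fin_val_cast, sub_eq_add_neg, ← sum_neg_distrib, ← Pi.single_neg]
  refine sum_mul_det_vandermonde_add_single (fun j => descPochhammer R j)
    (fun j => descPochhammer_natDegree R j) (fun j => monic_descPochhammer R j) _ _ x (-1)
    fun i j => ?_
  have hleft : (descPochhammer R (j + 1)).eval (x i)
      = x i * (descPochhammer R j).eval (x i - 1) := by
    simp [descPochhammer_succ_left]
  rw [← sub_eq_add_neg, ← sub_eq_add_neg, ← hleft, descPochhammer_succ_eval, mul_comm]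

end Vandermonde

section Recurrence

theorem sum_piAntidiag_univ_succ {ι M : Type*} [Fintype ι] [DecidableEq ι] [AddCommMonoid M]
    (m : ℕ) (i : ι) (f : (ι → ℕ) → M) (hf : ∀ l, l i = 0 → f l = 0) :
    ∑ l ∈ piAntidiag univ (m + 1), f l = ∑ l ∈ piAntidiag univ m, f (l + Pi.single i 1) := by
  refine .trans (sum_subset ?_ fun l hl hl' => hf l ?_).symm
    (sum_map (piAntidiag univ m) (addRightEmbedding (Pi.single i 1)) f)
  · intro l hl
    obtain ⟨k, hk, rfl⟩ := mem_map.1 hl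
    simpa [sum_add_distrib] using hk
  · by_contra hli
    have hle : Pi.single i 1 ≤ l := by
      intro k
      obtain rfl | hk := eq_or_ne k i
      · simpa [Nat.one_le_iff_ne_zero] using hli
      · simp [hk]
    refine hl' (mem_map.2 ⟨l - Pi.single i 1, ?_, tsub_add_cancel_of_le hle⟩)
    have hsum : ∑ k, (l - Pi.single i 1 : ι → ℕ) k + 1 = m + 1 := by
      conv_rhs => rw [← (mem_piAntidiag.1 hl).1, ← tsub_add_cancel_of_le hle]
      simp [sum_add_distrib]
    simpa using hsum

theorem strictAnti_add_single_one_iff {ι : Type*} [Preorder ι] [DecidableEq ι] {l : ι → ℕ} {i : ι}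
    (hl : Function.Injective l) (hl' : Function.Injective (l + Pi.single i 1)) :
    StrictAnti (l + Pi.single i 1) ↔ StrictAnti l := by
  have hle (k : ι) : (Pi.single i 1 : ι → ℕ) k ≤ 1 := by
    rw [Pi.single_apply]; split_ifs <;> simp
  constructor
  all_goals
    intro h a b hab
    have hlt := h hab
    have hne := hl.ne hab.ne
    have hne' := hl'.ne hab.ne
    have ha := hle a
    have hb := hle b
    simp only [Pi.add_apply] at hlt hne' ⊢
    omega

/-- The particle configurations `l 0 > l 1 > ⋯ > l (N - 1)` of total `m`. -/
def strictAntiOfSum (N m : ℕ) : Finset (Fin N → ℕ) :=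
  {l ∈ piAntidiag univ m | StrictAnti l}

theorem mem_strictAntiOfSum {N m : ℕ} {l : Fin N → ℕ} :
    l ∈ strictAntiOfSum N m ↔ ∑ i, l i = m ∧ StrictAnti l := by
  simp [strictAntiOfSum]

/-- The Vandermonde determinant `∏_{i < j} (l j - l i)` of a sequence of natural numbers, with
values in `R`. -/
def natVandermonde (R : Type*) [CommRing R] {N : ℕ} (l : Fin N → ℕ) : R :=
  (vandermonde fun i => (l i : R)).det

variable {R : Type*} [CommRing R] [IsDomain R] {N : ℕ}

theorem injective_of_natVandermonde_ne_zero {l : Fin N → ℕ} (hl : natVandermonde R l ≠ 0) :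
    Function.Injective l :=
  (det_vandermonde_ne_zero_iff.1 hl).of_comp (f := Nat.cast)

theorem sum_add_mul_natVandermonde_add_single_one (c : R) (l : Fin N → ℕ) :
    ∑ i, (c + l i) * natVandermonde R (l + Pi.single i 1)
      = (∑ i, (l i : R) + N * c + N.choose 2) * natVandermonde R l := by
  have hcast (i : Fin N) : (fun k => ((l + Pi.single i 1 : Fin N → ℕ) k : R))
      = (fun k => (l k : R)) + Pi.single i 1 := by
    ext k
    simp [Pi.single_apply]
  simp only [natVandermonde, hcast, sum_add_mul_det_vandermonde_add_single_one]
  simp [sum_add_distrib, add_comm]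

theorem sum_mul_natVandermonde_sub_single_one (l : Fin N → ℕ) :
    ∑ i, l i * natVandermonde R (l - Pi.single i 1)
      = (∑ i, (l i : R) - N.choose 2) * natVandermonde R l := by
  rw [natVandermonde, ← sum_mul_det_vandermonde_sub_single_one]
  refine sum_congr rfl fun i _ => ?_
  obtain hi | hi := Nat.eq_zero_or_pos (l i)
  · simp [hi]
  · rw [natVandermonde]
    congr 3
    ext k
    obtain rfl | hk := eq_or_ne k i
    · simp [Nat.cast_sub hi]
    · simp [hk]

variable (c : R) (W : (Fin N → ℕ) → R)
  (hW : ∀ l i, StrictAnti l → (l i + 1) * W (l + Pi.single i 1) = (c + l i) * W l)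

include hW

/- When one of the two configurations is not strictly decreasing, a Vandermonde factor vanishes. -/
theorem ite_strictAnti_natVandermonde_add_single_one (l : Fin N → ℕ) (i : Fin N) :
    (if StrictAnti (l + Pi.single i 1) then natVandermonde R (l + Pi.single i 1) *
        W (l + Pi.single i 1) * ((l i + 1) * natVandermonde R l) else 0)
      = if StrictAnti l then natVandermonde R l * W l *
          ((c + l i) * natVandermonde R (l + Pi.single i 1)) else 0 := by
  by_cases hl : natVandermonde R l = 0
  · simp [hl]
  by_cases hl' : natVandermonde R (l + Pi.single i 1) = 0
  · simp [hl']
  have hiff := strictAnti_add_single_one_iff (injective_of_natVandermonde_ne_zero hl)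
    (injective_of_natVandermonde_ne_zero hl')
  by_cases hanti : StrictAnti l
  · rw [if_pos (hiff.2 hanti), if_pos hanti]
    linear_combination natVandermonde R l * natVandermonde R (l + Pi.single i 1) * hW l i hanti
  · rw [if_neg (mt hiff.1 hanti), if_neg hanti]

theorem sum_strictAntiOfSum_succ (m : ℕ) :
    (m + 1 - N.choose 2) * ∑ l ∈ strictAntiOfSum N (m + 1), natVandermonde R l ^ 2 * W l
      = (m + N * c + N.choose 2) * ∑ l ∈ strictAntiOfSum N m, natVandermonde R l ^ 2 * W l := by
  have hswap (k : ℕ) (g : (Fin N → ℕ) → Fin N → R) : ∑ l ∈ strictAntiOfSum N k, ∑ i, g l i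
      = ∑ i, ∑ l ∈ piAntidiag univ k, if StrictAnti l then g l i else 0 := by
    rw [sum_comm]
    simp only [strictAntiOfSum, sum_filter]
  have hsum {k : ℕ} {l : Fin N → ℕ} (hl : l ∈ strictAntiOfSum N k) : ∑ i, (l i : R) = k := by
    rw [← (mem_strictAntiOfSum.1 hl).1, Nat.cast_sum]
  calc (m + 1 - N.choose 2) * ∑ l ∈ strictAntiOfSum N (m + 1), natVandermonde R l ^ 2 * W l
      = ∑ l ∈ strictAntiOfSum N (m + 1), ∑ i,
          natVandermonde R l * W l * (l i * natVandermonde R (l - Pi.single i 1)) := by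
        rw [mul_sum]
        refine sum_congr rfl fun l hl => ?_
        rw [← mul_sum, sum_mul_natVandermonde_sub_single_one, hsum hl, Nat.cast_succ]
        ring
    _ = ∑ l ∈ strictAntiOfSum N m, ∑ i,
          natVandermonde R l * W l * ((c + l i) * natVandermonde R (l + Pi.single i 1)) := by
        rw [hswap, hswap]
        refine sum_congr rfl fun i _ => ?_
        rw [sum_piAntidiag_univ_succ m i _ fun l hl => by simp [hl]]
        refine sum_congr rfl fun l _ => ?_
        rw [← ite_strictAnti_natVandermonde_add_single_one c W hW]
        simp
    _ = (m + N * c + N.choose 2) * ∑ l ∈ strictAntiOfSum N m, natVandermonde R l ^ 2 * W l := by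
        rw [mul_sum]
        refine sum_congr rfl fun l hl => ?_
        rw [← mul_sum, sum_add_mul_natVandermonde_add_single_one, hsum hl]
        ring

end Recurrence

section BetaNumbers

theorem antitone_add_val_of_strictAnti {N : ℕ} {l : Fin N → ℕ} (hl : StrictAnti l) :
    Antitone fun i => l i + i := by
  cases N with
  | zero => exact fun i => i.elim0
  | succ N =>
    refine Fin.antitone_iff_succ_le.2 fun i => ?_
    have hlt := hl i.castSucc_lt_succ
    simp only [Fin.val_succ, Fin.val_castSucc]
    omega

theorem val_rev_le_of_strictAnti {N : ℕ} {l : Fin N → ℕ} (hl : StrictAnti l) (i : Fin N) :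
    (i.rev : ℕ) ≤ l i := by
  have hlast : (i : ℕ) ≤ N - 1 := by omega
  have hle := antitone_add_val_of_strictAnti hl (b := ⟨N - 1, by omega⟩) (a := i) hlast
  simp only [Fin.val_rev] at hle ⊢
  omega

/-- The beta-numbers `λ_i + N - 1 - i` of a partition `λ`, for `i < N`. They determine `λ` as soon
as it has at most `N` rows. -/
def betaNumbers (N : ℕ) (Y : YoungDiagram) (i : Fin N) : ℕ := Y.rowLen i + i.rev

/-- The numbers `j + N - λ'_j`. If `λ` has at most `N` rows, these are the natural numbers that are
not beta-numbers of `λ`. -/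
def betaGap (N : ℕ) (Y : YoungDiagram) (j : ℕ) : ℕ := j + (N - Y.colLen j)

theorem strictAnti_betaNumbers (N : ℕ) (Y : YoungDiagram) : StrictAnti (betaNumbers N Y) :=
  fun i k hik => add_lt_add_of_le_of_lt (Y.rowLen_anti i k hik.le) (Fin.rev_lt_rev.2 hik)

theorem strictMono_betaGap (N : ℕ) (Y : YoungDiagram) : StrictMono (betaGap N Y) :=
  fun i j hij => add_lt_add_of_lt_of_le hij (Nat.sub_le_sub_left (Y.colLen_anti i j hij.le) N)

variable {N : ℕ} {Y : YoungDiagram}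

theorem lt_colLen_iff_lt_rowLen {i j : ℕ} : i < Y.colLen j ↔ j < Y.rowLen i := by
  rw [← YoungDiagram.mem_iff_lt_colLen, YoungDiagram.mem_iff_lt_rowLen]

theorem betaGap_lt_betaNumbers {i : Fin N} {j : ℕ} (hj : j < Y.rowLen i) :
    betaGap N Y j < betaNumbers N Y i := by
  have hi := lt_colLen_iff_lt_rowLen.2 hj
  simp only [betaGap, betaNumbers, Fin.val_rev]
  omega

theorem betaNumbers_lt_betaGap {i : Fin N} {j : ℕ} (hj : Y.rowLen i ≤ j) :
    betaNumbers N Y i < betaGap N Y j := by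
  have hi : Y.colLen j ≤ i := not_lt.1 (mt lt_colLen_iff_lt_rowLen.1 hj.not_gt)
  simp only [betaGap, betaNumbers, Fin.val_rev]
  omega

theorem betaGap_ne_betaNumbers (i : Fin N) (j : ℕ) : betaGap N Y j ≠ betaNumbers N Y i := by
  obtain hj | hj := lt_or_ge j (Y.rowLen i)
  · exact (betaGap_lt_betaNumbers hj).ne
  · exact (betaNumbers_lt_betaGap hj).ne'

theorem disjoint_image_betaGap_image_betaNumbers (s : Finset ℕ) (t : Finset (Fin N)) :
    Disjoint (s.image (betaGap N Y)) (t.image (betaNumbers N Y)) := by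
  simp only [disjoint_left, mem_image, not_exists, not_and]
  rintro _ ⟨j, -, rfl⟩ i - h
  exact betaGap_ne_betaNumbers i j h.symm

theorem image_betaGap_union_image_betaNumbers (i : Fin N) :
    (range (Y.rowLen i)).image (betaGap N Y) ∪ (Ioi i).image (betaNumbers N Y)
      = range (betaNumbers N Y i) := by
  refine eq_of_subset_of_card_le (union_subset ?_ ?_) ?_
  · simp only [image_subset_iff, mem_range]
    exact fun j hj => betaGap_lt_betaNumbers hj
  · simp only [image_subset_iff, mem_range, mem_Ioi]
    exact fun k hk => strictAnti_betaNumbers N Y hk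
  · rw [card_union_of_disjoint (disjoint_image_betaGap_image_betaNumbers _ _),
      card_image_of_injective _ (strictMono_betaGap N Y).injective,
      card_image_of_injective _ (strictAnti_betaNumbers N Y).injective, card_range, card_range,
      Fin.card_Ioi, betaNumbers, Fin.val_rev]
    omega

variable (hY : Y.colLen 0 ≤ N)

include hY

theorem hookLen_eq_betaNumbers_sub_betaGap {i : Fin N} {j : ℕ} (hj : j < Y.rowLen i) :
    hookLen Y (i, j) = betaNumbers N Y i - betaGap N Y j := by
  have hi := lt_colLen_iff_lt_rowLen.2 hj
  have hcol := (Y.colLen_anti 0 j j.zero_le).trans hY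
  simp only [hookLen, betaNumbers, betaGap, Fin.val_rev]
  omega

/- The factors are `β i - x`, with `x` running through the gaps and beta-numbers below `β i`, which
exhaust `{0, …, β i - 1}`. -/
theorem prod_hookLen_row_mul_prod_betaNumbers_sub (i : Fin N) :
    (∏ j ∈ range (Y.rowLen i), hookLen Y (i, j)) *
      ∏ k ∈ Ioi i, (betaNumbers N Y i - betaNumbers N Y k) = (betaNumbers N Y i)! := by
  have hhook : ∏ j ∈ range (Y.rowLen i), hookLen Y (i, j)
      = ∏ x ∈ (range (Y.rowLen i)).image (betaGap N Y), (betaNumbers N Y i - x) := by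
    rw [prod_image (strictMono_betaGap N Y).injective.injOn]
    exact prod_congr rfl fun j hj => hookLen_eq_betaNumbers_sub_betaGap hY (mem_range.1 hj)
  rw [hhook, ← prod_image (f := fun x => betaNumbers N Y i - x)
      (strictAnti_betaNumbers N Y).injective.injOn,
    ← prod_union (disjoint_image_betaGap_image_betaNumbers _ _),
    image_betaGap_union_image_betaNumbers, ← Nat.descFactorial_eq_prod_range,
    Nat.descFactorial_self]

theorem lt_of_mem_of_colLen_le {i j : ℕ} (h : (i, j) ∈ Y) : i < N :=
  (YoungDiagram.mem_iff_lt_colLen.1 h).trans_le ((Y.colLen_anti 0 j j.zero_le).trans hY)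

@[to_additive]
theorem prod_cells_eq_prod_rows {M : Type*} [CommMonoid M] (f : ℕ × ℕ → M) :
    ∏ c ∈ Y.cells, f c = ∏ i : Fin N, ∏ j ∈ range (Y.rowLen i), f (i, j) := by
  rw [Fin.prod_univ_eq_prod_range fun i => ∏ j ∈ range (Y.rowLen i), f (i, j),
    ← prod_fiberwise_of_maps_to (g := Prod.fst) (t := range N)]
  · refine prod_congr rfl fun i _ => ?_
    have hrow : {c ∈ Y.cells | c.1 = i} = {i} ×ˢ range (Y.rowLen i) := YoungDiagram.row_eq_prod
    rw [hrow, prod_product, prod_singleton]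
  · exact fun c hc => mem_range.2 (lt_of_mem_of_colLen_le hY ((YoungDiagram.mem_cells c).1 hc))

theorem sum_betaNumbers : ∑ i, betaNumbers N Y i = Y.card + N.choose 2 := by
  have hcard : ∑ i : Fin N, Y.rowLen i = Y.card := by
    rw [YoungDiagram.card, card_eq_sum_ones, sum_cells_eq_sum_rows hY]
    simp
  have hrev : ∑ i : Fin N, (i.rev : ℕ) = N.choose 2 :=
    (Equiv.sum_comp Fin.revPerm fun i : Fin N => (i : ℕ)).trans (sum_fin_val_cast N)
  simp only [betaNumbers, sum_add_distrib, hcard, hrev]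

theorem eq_of_betaNumbers_eq {Y' : YoungDiagram} (hY' : Y'.colLen 0 ≤ N)
    (h : betaNumbers N Y = betaNumbers N Y') : Y = Y' := by
  have hrow (i : ℕ) (hi : i < N) : Y.rowLen i = Y'.rowLen i :=
    Nat.add_right_cancel (congrFun h ⟨i, hi⟩)
  ext ⟨i, j⟩
  obtain hi | hi := lt_or_ge i N
  · simp only [YoungDiagram.mem_cells, YoungDiagram.mem_iff_lt_rowLen, hrow i hi]
  · exact iff_of_false (fun hc => (lt_of_mem_of_colLen_le hY hc).not_ge hi)
      fun hc => (lt_of_mem_of_colLen_le hY' hc).not_ge hi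

omit hY in
theorem exists_betaNumbers_eq {l : Fin N → ℕ} (hl : StrictAnti l) :
    ∃ Y : YoungDiagram, Y.colLen 0 ≤ N ∧ betaNumbers N Y = l := by
  have hrev := val_rev_le_of_strictAnti hl
  have hanti : Antitone fun i => l i - i.rev := by
    intro i k hik
    have hle := antitone_add_val_of_strictAnti hl hik
    have hk := hrev k
    simp only [Fin.val_rev] at hle hk ⊢
    omega
  refine ⟨YoungDiagram.ofRowLens _ hanti.sortedGE_ofFn, ?_, ?_⟩
  · by_contra! h
    obtain ⟨h, -⟩ := YoungDiagram.mem_ofRowLens.1 (YoungDiagram.mem_iff_lt_colLen.2 h)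
    simp at h
  · ext i
    have hrow := YoungDiagram.rowLen_ofRowLens (hw := hanti.sortedGE_ofFn) ⟨i, by simp⟩
    rw [betaNumbers, hrow]
    simpa using Nat.sub_add_cancel (hrev i)

end BetaNumbers

section WeightAtNaturalNumber

/-- The weight `∏ i, (c)_{l i} / (l i)!` of the Meixner ensemble, divided by the Pochhammer symbols
`(c)_{N - 1 - i}`, which do not depend on `l` but may vanish. -/
def meixnerWeight {N : ℕ} (c : ℂ) (l : Fin N → ℕ) : ℂ :=
  ∏ i, (∏ k ∈ Ico (i.rev : ℕ) (l i), (c + k)) / ((l i)! : ℂ)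

theorem meixnerWeight_add_single_one {N : ℕ} (c : ℂ) (l : Fin N → ℕ) (i : Fin N)
    (hl : StrictAnti l) :
    (l i + 1) * meixnerWeight c (l + Pi.single i 1) = (c + l i) * meixnerWeight c l := by
  have hoff : ∏ j ∈ univ.erase i, (∏ k ∈ Ico (j.rev : ℕ) ((l + Pi.single i 1 : Fin N → ℕ) j),
        (c + k)) / (((l + Pi.single i 1 : Fin N → ℕ) j)! : ℂ)
      = ∏ j ∈ univ.erase i, (∏ k ∈ Ico (j.rev : ℕ) (l j), (c + k)) / ((l j)! : ℂ) :=
    prod_congr rfl fun j hj => by simp [ne_of_mem_erase hj]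
  have hfact : ((l i)! : ℂ) ≠ 0 := Nat.cast_ne_zero.2 (Nat.factorial_ne_zero _)
  have hsucc : (l i + 1 : ℂ) ≠ 0 := Nat.cast_add_one_ne_zero _
  rw [meixnerWeight, meixnerWeight, ← mul_prod_erase _ _ (mem_univ i),
    ← mul_prod_erase univ (fun j => (∏ k ∈ Ico (j.rev : ℕ) (l j), (c + k)) / ((l j)! : ℂ))
      (mem_univ i), hoff, Pi.add_apply, Pi.single_eq_same,
    prod_Ico_succ_top (val_rev_le_of_strictAnti hl i), Nat.factorial_succ]
  push_cast
  field_simp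

theorem natVandermonde_sq {R : Type*} [CommRing R] {N : ℕ} {l : Fin N → ℕ} (hl : Antitone l) :
    natVandermonde R l ^ 2 = ((∏ i, ∏ k ∈ Ioi i, (l i - l k) : ℕ) : R) ^ 2 := by
  simp only [natVandermonde, det_vandermonde, Nat.cast_prod, ← prod_pow]
  refine prod_congr rfl fun i _ => prod_congr rfl fun k hk => ?_
  rw [Nat.cast_sub (hl (mem_Ioi.1 hk).le)]
  ring

theorem zWeight_eq_prod_div_prod (z z' : ℂ) (Y : YoungDiagram) :
    zWeight z z' Y = (∏ c ∈ Y.cells, (z + cellContent c)) * (∏ c ∈ Y.cells, (z' + cellContent c))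
      / ((∏ c ∈ Y.cells, hookLen Y c : ℕ) : ℂ) ^ 2 := by
  simp only [zWeight, prod_div_distrib, prod_mul_distrib, prod_pow, Nat.cast_prod]

variable {N : ℕ} {Y : YoungDiagram}

theorem zWeight_natCast_eq_zero (hY : N < Y.colLen 0) (z' : ℂ) : zWeight N z' Y = 0 :=
  prod_eq_zero ((YoungDiagram.mem_cells (N, 0)).2 (YoungDiagram.mem_iff_lt_colLen.2 hY))
    (by simp [cellContent])

variable (hY : Y.colLen 0 ≤ N)

include hY

theorem prod_hookLen_mul_prod_betaNumbers_sub :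
    (∏ c ∈ Y.cells, hookLen Y c) * ∏ i, ∏ k ∈ Ioi i, (betaNumbers N Y i - betaNumbers N Y k)
      = ∏ i, (betaNumbers N Y i)! := by
  rw [prod_cells_eq_prod_rows hY, ← prod_mul_distrib]
  exact prod_congr rfl fun i _ => prod_hookLen_row_mul_prod_betaNumbers_sub hY i

theorem prod_add_cellContent (w : ℂ) :
    ∏ c ∈ Y.cells, (w + cellContent c)
      = ∏ i : Fin N, ∏ k ∈ Ico (i.rev : ℕ) (betaNumbers N Y i), (w + 1 - N + k) := by
  rw [prod_cells_eq_prod_rows hY]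
  refine prod_congr rfl fun i _ => ?_
  rw [prod_Ico_eq_prod_range, betaNumbers, Nat.add_sub_cancel]
  refine prod_congr rfl fun j _ => ?_
  rw [cellContent, Fin.val_rev]
  push_cast [Nat.cast_sub i.is_lt]
  ring

theorem prod_factorial_rev_mul_prod_natCast_add_cellContent :
    ((∏ i : Fin N, (i.rev : ℕ)! : ℕ) : ℂ) * ∏ c ∈ Y.cells, ((N : ℂ) + cellContent c)
      = ((∏ i, (betaNumbers N Y i)! : ℕ) : ℂ) := by
  rw [prod_add_cellContent hY, Nat.cast_prod, Nat.cast_prod, ← prod_mul_distrib]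
  refine prod_congr rfl fun i _ => ?_
  have hrev : (i.rev : ℕ) ≤ betaNumbers N Y i := Nat.le_add_left _ _
  rw [← prod_range_add_one_eq_factorial, ← prod_range_add_one_eq_factorial,
    ← prod_range_mul_prod_Ico _ hrev]
  push_cast
  refine congrArg _ (prod_congr rfl fun k _ => ?_)
  ring

theorem zWeight_natCast_eq (z' : ℂ) :
    zWeight N z' Y = natVandermonde ℂ (betaNumbers N Y) ^ 2 *
      meixnerWeight (z' + 1 - N) (betaNumbers N Y) / ((∏ i : Fin N, (i.rev : ℕ)! : ℕ) : ℂ) := by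
  have hrev : ((∏ i : Fin N, (i.rev : ℕ)! : ℕ) : ℂ) ≠ 0 :=
    Nat.cast_ne_zero.2 (prod_ne_zero_iff.2 fun i _ => Nat.factorial_ne_zero _)
  have hbeta : ((∏ i, (betaNumbers N Y i)! : ℕ) : ℂ) ≠ 0 :=
    Nat.cast_ne_zero.2 (prod_ne_zero_iff.2 fun i _ => Nat.factorial_ne_zero _)
  have hhook := congrArg (Nat.cast : ℕ → ℂ) (prod_hookLen_mul_prod_betaNumbers_sub hY)
  rw [Nat.cast_mul] at hhook
  have hhook_ne := left_ne_zero_of_mul (hhook ▸ hbeta)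
  rw [zWeight_eq_prod_div_prod, meixnerWeight, prod_div_distrib, ← prod_add_cellContent hY,
    ← Nat.cast_prod, natVandermonde_sq (strictAnti_betaNumbers N Y).antitone,
    eq_div_of_mul_eq hhook_ne ((mul_comm _ _).trans hhook),
    eq_div_of_mul_eq hrev ((mul_comm _ _).trans
      (prod_factorial_rev_mul_prod_natCast_add_cellContent hY))]
  field_simp

end WeightAtNaturalNumber

section SumOverLevel

theorem finite_setOf_card_eq (n : ℕ) : {Y : YoungDiagram | Y.card = n}.Finite := by
  refine Set.Finite.of_finite_image (f := YoungDiagram.cells)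
    ((range n ×ˢ range n).powerset.finite_toSet.subset ?_) fun Y _ Y' _ => YoungDiagram.ext
  rintro _ ⟨Y, rfl, rfl⟩
  refine mem_coe.2 (mem_powerset.2 fun ⟨i, j⟩ hc => ?_)
  rw [YoungDiagram.mem_cells] at hc
  rw [mem_product, mem_range, mem_range]
  constructor
  · exact (YoungDiagram.mem_iff_lt_colLen.1 hc).trans_le
      (Y.colLen_eq_card.trans_le (card_le_card (filter_subset _ _)))
  · exact (YoungDiagram.mem_iff_lt_rowLen.1 hc).trans_le
      (Y.rowLen_eq_card.trans_le (card_le_card (filter_subset _ _)))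

/-- The partitions of `n`, as Young diagrams. -/
def diagramsOfCard (n : ℕ) : Finset YoungDiagram := (finite_setOf_card_eq n).toFinset

theorem mem_diagramsOfCard {n : ℕ} {Y : YoungDiagram} : Y ∈ diagramsOfCard n ↔ Y.card = n :=
  (finite_setOf_card_eq n).mem_toFinset

theorem diagramsOfCard_zero : diagramsOfCard 0 = {⊥} := by
  ext Y
  rw [mem_diagramsOfCard, mem_singleton, YoungDiagram.card, card_eq_zero,
    ← YoungDiagram.cells_bot]
  exact ⟨YoungDiagram.ext, congrArg YoungDiagram.cells⟩

theorem sum_zWeight_natCast (N n : ℕ) (z' : ℂ) :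
    ∑ Y ∈ diagramsOfCard n, zWeight N z' Y
      = (∑ l ∈ strictAntiOfSum N (n + N.choose 2),
          natVandermonde ℂ l ^ 2 * meixnerWeight (z' + 1 - N) l) /
        ((∏ i : Fin N, (i.rev : ℕ)! : ℕ) : ℂ) := by
  have hlong : ∀ Y ∈ diagramsOfCard n, zWeight N z' Y ≠ 0 → Y.colLen 0 ≤ N :=
    fun Y _ hne => not_lt.1 fun hY => hne (zWeight_natCast_eq_zero hY z')
  rw [← sum_filter_of_ne hlong, sum_div]
  refine sum_bij (fun Y _ => betaNumbers N Y) ?_ ?_ ?_ ?_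
  · intro Y hY
    obtain ⟨hcard, hcol⟩ := mem_filter.1 hY
    rw [mem_strictAntiOfSum, sum_betaNumbers hcol, mem_diagramsOfCard.1 hcard]
    exact ⟨rfl, strictAnti_betaNumbers N Y⟩
  · exact fun Y hY Y' hY' => eq_of_betaNumbers_eq (mem_filter.1 hY).2 (mem_filter.1 hY').2
  · intro l hl
    obtain ⟨hsum, hanti⟩ := mem_strictAntiOfSum.1 hl
    obtain ⟨Y, hcol, rfl⟩ := exists_betaNumbers_eq hanti
    rw [sum_betaNumbers hcol] at hsum
    exact ⟨Y, mem_filter.2 ⟨mem_diagramsOfCard.2 (Nat.add_right_cancel hsum), hcol⟩, rfl⟩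
  · exact fun Y hY => zWeight_natCast_eq (mem_filter.1 hY).2 z'

theorem succ_mul_sum_zWeight_natCast (N n : ℕ) (z' : ℂ) :
    (n + 1) * ∑ Y ∈ diagramsOfCard (n + 1), zWeight N z' Y
      = (N * z' + n) * ∑ Y ∈ diagramsOfCard n, zWeight N z' Y := by
  have hrec := sum_strictAntiOfSum_succ (z' + 1 - N) (meixnerWeight (N := N) (z' + 1 - N))
    (fun l i hl => meixnerWeight_add_single_one _ l i hl) (n + N.choose 2)
  rw [sum_zWeight_natCast, sum_zWeight_natCast, mul_div_assoc', mul_div_assoc',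
    Nat.add_right_comm]
  congr 1
  push_cast [Nat.cast_choose_two] at hrec
  linear_combination hrec

theorem factorial_mul_sum_zWeight_natCast (N n : ℕ) (z' : ℂ) :
    (n ! : ℂ) * ∑ Y ∈ diagramsOfCard n, zWeight N z' Y = (ascPochhammer ℂ n).eval (N * z') := by
  induction n with
  | zero => simp [diagramsOfCard_zero, zWeight]
  | succ n ih =>
    rw [ascPochhammer_succ_eval, ← ih, Nat.factorial_succ, Nat.cast_mul, Nat.cast_add_one]
    linear_combination (n ! : ℂ) * succ_mul_sum_zWeight_natCast N n z'

/-- The weight `zWeight z z' Y` as a polynomial in `z`. -/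
def zWeightPoly (z' : ℂ) (Y : YoungDiagram) : ℂ[X] :=
  ∏ c ∈ Y.cells, (X + C (cellContent c : ℂ)) * C ((z' + cellContent c) / (hookLen Y c : ℂ) ^ 2)

theorem eval_zWeightPoly (z z' : ℂ) (Y : YoungDiagram) :
    (zWeightPoly z' Y).eval z = zWeight z z' Y := by
  simp only [zWeightPoly, zWeight, eval_prod, eval_mul, eval_add, eval_X, eval_C, mul_div_assoc]

theorem factorial_mul_sum_zWeight (n : ℕ) (z z' : ℂ) :
    (n ! : ℂ) * ∑ Y ∈ diagramsOfCard n, zWeight z z' Y = (ascPochhammer ℂ n).eval (z * z') := by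
  have heq : C (n ! : ℂ) * ∑ Y ∈ diagramsOfCard n, zWeightPoly z' Y
      = (ascPochhammer ℂ n).comp (X * C z') := by
    refine eq_of_infinite_eval_eq _ _
      ((Set.infinite_range_of_injective (Nat.cast_injective (R := ℂ))).mono ?_)
    rintro _ ⟨N, rfl⟩
    simpa only [Set.mem_ofPred_eq, eval_mul, eval_C, eval_finsetSum, eval_zWeightPoly, eval_comp,
      eval_X] using factorial_mul_sum_zWeight_natCast N n z'
  simpa only [eval_mul, eval_C, eval_finsetSum, eval_zWeightPoly, eval_comp, eval_X]
    using congrArg (eval z) heq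

end SumOverLevel

section Fiberwise

variable {α β : Type*} {g : α → β} {fiber : β → Finset α}

theorem summable_of_summable_sum_fiber (hfiber : ∀ {b a}, a ∈ fiber b ↔ g a = b) {f : α → ℝ}
    (hf : 0 ≤ f) (hs : Summable fun b => ∑ a ∈ fiber b, f a) : Summable f := by
  have hpart (a : α) : ∃! b, a ∈ (fiber b : Set α) :=
    ⟨g a, hfiber.2 rfl, fun b hb => (hfiber.1 hb).symm⟩
  refine (summable_partition hf hpart).2 ⟨fun b => (fiber b).summable f, ?_⟩
  simpa only [tsum_subtype'] using hs

theorem hasSum_sum_fiber {E : Type*} [AddCommGroup E] [UniformSpace E] [IsUniformAddGroup E]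
    [CompleteSpace E] [T2Space E] (hfiber : ∀ {b a}, a ∈ fiber b ↔ g a = b) {f : α → E} {s : E}
    (hf : HasSum f s) : HasSum (fun b => ∑ a ∈ fiber b, f a) s := by
  have hpre (b : β) : g ⁻¹' {b} = fiber b := Set.ext fun a => hfiber.symm
  exact (hf.tsum_fiberwise g).congr_fun fun b => by rw [hpre b, tsum_subtype']

end Fiberwise

section Convergence

theorem hasSum_pow_mul_ascPochhammer_div_factorial (w : ℂ) {ξ : ℂ} (hξ : ‖ξ‖ < 1) :
    HasSum (fun n : ℕ => ξ ^ n * ((ascPochhammer ℂ n).eval w / (n ! : ℂ)))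
      ((1 - ξ) ^ (-w)) := by
  have hmem : ξ ∈ Metric.eball (0 : ℂ) 1 := by
    rw [← ENNReal.ofReal_one, Metric.eball_ofReal]
    exact mem_ball_zero_iff.2 hξ
  have hseries := (Complex.one_div_one_sub_cpow_hasFPowerSeriesOnBall_zero w).hasSum hmem
  rw [zero_add, one_div, ← Complex.cpow_neg] at hseries
  refine hseries.congr_fun fun n => ?_
  have hchoose := Ring.factorial_nsmul_multichoose_eq_ascPochhammer w n
  rw [ascPochhammer_smeval_eq_eval, nsmul_eq_mul, Ring.multichoose_eq] at hchoose
  rw [FormalMultilinearSeries.ofScalars_apply_eq, smul_eq_mul, ← hchoose,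
    mul_div_cancel_left₀ _ (Nat.cast_ne_zero.2 n.factorial_ne_zero), mul_comm]

theorem hasSum_sum_pow_card_mul_zWeight (z z' : ℂ) {ξ : ℂ} (hξ : ‖ξ‖ < 1) :
    HasSum (fun n => ∑ Y ∈ diagramsOfCard n, ξ ^ Y.card * zWeight z z' Y)
      ((1 - ξ) ^ (-(z * z'))) := by
  refine (hasSum_pow_mul_ascPochhammer_div_factorial (z * z') hξ).congr_fun fun n => ?_
  rw [← factorial_mul_sum_zWeight, mul_div_cancel_left₀ _ (Nat.cast_ne_zero.2 n.factorial_ne_zero),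
    mul_sum]
  exact sum_congr rfl fun Y hY => by rw [mem_diagramsOfCard.1 hY]

/-- The product of `|z + c(□)| / h(□)` over the cells of `Y`, the square root of the positive weight
`zWeight z (conj z) Y`. -/
def zAmplitude (z : ℂ) (Y : YoungDiagram) : ℝ :=
  ∏ c ∈ Y.cells, ‖z + cellContent c‖ / hookLen Y c

theorem norm_zWeight (z z' : ℂ) (Y : YoungDiagram) :
    ‖zWeight z z' Y‖ = zAmplitude z Y * zAmplitude z' Y := by
  simp only [zWeight, zAmplitude, norm_prod, norm_div, norm_mul, Complex.norm_natCast,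
    ← prod_mul_distrib, div_mul_div_comm, sq]

theorem zWeight_conj (z : ℂ) (Y : YoungDiagram) :
    zWeight z (starRingEnd ℂ z) Y = ((zAmplitude z Y ^ 2 : ℝ) : ℂ) := by
  rw [zWeight, zAmplitude, ← prod_pow, Complex.ofReal_prod]
  refine prod_congr rfl fun c _ => ?_
  have hconj : starRingEnd ℂ z + cellContent c = starRingEnd ℂ (z + cellContent c) := by
    rw [map_add, map_intCast]
  rw [hconj, Complex.mul_conj']
  push_cast
  rw [div_pow]

theorem summable_pow_card_mul_zAmplitude_sq (z : ℂ) {r : ℝ} (hr₀ : 0 ≤ r) (hr₁ : r < 1) :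
    Summable fun Y : YoungDiagram => r ^ Y.card * zAmplitude z Y ^ 2 := by
  refine summable_of_summable_sum_fiber mem_diagramsOfCard
    (fun Y => mul_nonneg (pow_nonneg hr₀ _) (sq_nonneg _)) (Complex.summable_ofReal.1 ?_)
  have hr : ‖(r : ℂ)‖ < 1 := by rwa [Complex.norm_of_nonneg hr₀]
  simpa only [zWeight_conj, ← Complex.ofReal_pow, ← Complex.ofReal_mul, ← Complex.ofReal_sum]
    using (hasSum_sum_pow_card_mul_zWeight z (starRingEnd ℂ z) hr).summable

theorem summable_norm_pow_card_mul_zWeight (z z' : ℂ) {ξ : ℂ} (hξ : ‖ξ‖ < 1) :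
    Summable fun Y : YoungDiagram => ‖ξ ^ Y.card * zWeight z z' Y‖ := by
  refine Summable.of_nonneg_of_le (fun Y => norm_nonneg _) (fun Y => ?_)
    ((summable_pow_card_mul_zAmplitude_sq z (norm_nonneg ξ) hξ).add
      (summable_pow_card_mul_zAmplitude_sq z' (norm_nonneg ξ) hξ))
  have hamgm : zAmplitude z Y * zAmplitude z' Y ≤ zAmplitude z Y ^ 2 + zAmplitude z' Y ^ 2 := by
    linarith [two_mul_le_add_sq (zAmplitude z Y) (zAmplitude z' Y), sq_nonneg (zAmplitude z Y),
      sq_nonneg (zAmplitude z' Y)]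
  rw [norm_mul, norm_pow, norm_zWeight, ← mul_add]
  exact mul_le_mul_of_nonneg_left hamgm (pow_nonneg (norm_nonneg ξ) _)

end Convergence

/-- For all `z, z' ∈ ℂ` and `ξ ∈ ℂ` with `|ξ| < 1`, the series
`Σ_λ ξ^{|λ|} Π_{□∈λ} (z + c(□))(z' + c(□))/h(□)²` over all partitions converges absolutely
and equals `(1 − ξ)^{−zz'}` (principal branch of the complex power). -/
theorem tsum_zMeasure_eq_cpow (z z' ξ : ℂ) (hξ : ‖ξ‖ < 1) :
    Summable (fun Y : YoungDiagram => ‖ξ ^ Y.card * zWeight z z' Y‖) ∧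
    ∑' Y : YoungDiagram, ξ ^ Y.card * zWeight z z' Y = (1 - ξ) ^ (-(z * z')) := by
  have hsummable := summable_norm_pow_card_mul_zWeight z z' hξ
  have hlevels := hasSum_sum_fiber mem_diagramsOfCard hsummable.of_norm.hasSum
  exact ⟨hsummable, hlevels.unique (hasSum_sum_pow_card_mul_zWeight z z' hξ)⟩

end
end

section
/- Let α, β, z, z' ∈ ℂ with |αβ| < 1, and let i, j ∈ ℤ + 1/2. Then the dual matrix coefficient ⟨i|j⟩*_{α,β,z,z'} satisfies: for i ≤ j, ⟨i|j⟩*_{α,β,z,z'} = ((−β)^{j−i}/(j−i)!) (z'+i+1/2)_{j−i} · F(z+j+1/2, z'+j+1/2; j−i+1; αβ), and for i ≥ j, ⟨i|j⟩*_{α,β,z,z'} = ((−α)^{i−j}/(i−j)!) (z+j+1/2)_{i−j} · F(z+i+1/2, z'+i+1/2; i−j+1; αβ), where F(a,b;c;w) = Σ_{k≥0} (a)_k (b)_k / ((c)_k k!) · w^k is the Gauss hypergeometric series. -/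
open scoped Classical

noncomputable section

/-- Rising factorial (Pochhammer symbol) `(a)_s = a(a+1)⋯(a+s−1)`. -/
def riseFac (a : ℂ) (s : ℕ) : ℂ := ∏ t ∈ Finset.range s, (a + t)

/-- Falling factorial `(a)_{↓s} = a(a−1)⋯(a−s+1)`. -/
def fallFac (a : ℂ) (s : ℕ) : ℂ := ∏ t ∈ Finset.range s, (a - t)

/-- The Gauss hypergeometric series `F(a,b;c;w) = Σ_{k≥0} (a)_k (b)_k / ((c)_k k!) · wᵏ`. -/
def gaussHyp (a b c w : ℂ) : ℂ :=
  ∑' k : ℕ, riseFac a k * riseFac b k / (riseFac c k * (k.factorial : ℂ)) * w ^ k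

/-- The matrix coefficient `⟨i|j⟩_{α,β,z,z'}`, i.e. the coefficient of `v_j` in
`e^{αU} e^{βD} v_i` for the `sl(2)`-action `U v_k = (z+k+1/2)v_{k+1}`,
`D v_k = (z'+k−1/2)v_{k−1}` on the module with basis `{v_k}_{k ∈ ℤ+1/2}`.
Half-integers are encoded by integers: `i = a + 1/2`, `j = b + 1/2` with `a, b ∈ ℤ`.
By definition
`⟨i|j⟩ = Σ_{s ≥ max(0,i−j)} (βˢ/s!)(z'+i−1/2)_{↓s} · (α^{j−i+s}/(j−i+s)!)(z+i−s+1/2)_{j−i+s}`,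
the terms with `j − i + s < 0` being absent. -/
def mcoef (α β z z' : ℂ) (a b : ℤ) : ℂ :=
  ∑' s : ℕ, if b - a + (s : ℤ) < 0 then 0 else
    (β ^ s / (s.factorial : ℂ)) * fallFac (z' + ((a : ℂ) + 1/2) - 1/2) s *
      (α ^ (b - a + (s : ℤ)).toNat / ((b - a + (s : ℤ)).toNat.factorial : ℂ)) *
      riseFac (z + ((a : ℂ) + 1/2) - s + 1/2) (b - a + (s : ℤ)).toNat

/-- The dual matrix coefficient `⟨i|j⟩*_{α,β,z,z'}`, i.e. the coefficient of `v*_j` in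
`e^{αU} e^{βD} v*_i` for the dual `sl(2)`-action `U v*_k = −(z+k−1/2)v*_{k−1}`,
`D v*_k = −(z'+k+1/2)v*_{k+1}`.  Half-integers are encoded as `i = a + 1/2`, `j = b + 1/2`.
By definition
`⟨i|j⟩* = Σ_{s ≥ max(0,j−i)} ((−β)ˢ/s!)(z'+i+1/2)_s · ((−α)^{i+s−j}/(i+s−j)!)(z+i+s−1/2)_{↓(i+s−j)}`,
the terms with `i + s − j < 0` being absent. -/
def mcoefStar (α β z z' : ℂ) (a b : ℤ) : ℂ :=
  ∑' s : ℕ, if a - b + (s : ℤ) < 0 then 0 else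
    ((-β) ^ s / (s.factorial : ℂ)) * riseFac (z' + ((a : ℂ) + 1/2) + 1/2) s *
      ((-α) ^ (a - b + (s : ℤ)).toNat / ((a - b + (s : ℤ)).toNat.factorial : ℂ)) *
      fallFac (z + ((a : ℂ) + 1/2) + s - 1/2) (a - b + (s : ℤ)).toNat

/-! Once the absent terms are discarded and the falling factorial is read backwards as a rising
one, the series for `⟨i|j⟩*` is `∑ₖ (uⁿ⁺ᵏ (x)ₙ₊ₖ / (n+k)!) (vᵏ (y)ₖ / k!)` with `n = |i - j|` and
`{u, v} = {-α, -β}`. Splitting `(x)ₙ₊ₖ = (x)ₙ (x+n)ₖ` and `(n+k)! = n! (n+1)ₖ` exposes the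
prefactor `uⁿ (x)ₙ / n!` and leaves `F(x+n, y; n+1; uv)`, where `uv = αβ`. The cases `i ≤ j` and
`i ≥ j` exchange the roles of `α` and `β`. -/

theorem riseFac_eq_ascPochhammer_eval (x : ℂ) (n : ℕ) :
    riseFac x n = (ascPochhammer ℂ n).eval x := by
  induction n with
  | zero => simp [riseFac]
  | succ n ih => rw [ascPochhammer_succ_eval, ← ih, riseFac, Finset.prod_range_succ, riseFac]

theorem fallFac_eq_descPochhammer_eval (x : ℂ) (n : ℕ) :
    fallFac x n = (descPochhammer ℂ n).eval x :=
  (descPochhammer_eval_eq_prod_range n x).symm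

theorem fallFac_eq_riseFac (x : ℂ) (n : ℕ) : fallFac x n = riseFac (x - n + 1) n := by
  rw [fallFac_eq_descPochhammer_eval, riseFac_eq_ascPochhammer_eval,
    descPochhammer_eval_eq_ascPochhammer]

theorem riseFac_add (x : ℂ) (n k : ℕ) : riseFac x (n + k) = riseFac x n * riseFac (x + n) k := by
  simp only [riseFac_eq_ascPochhammer_eval, ← ascPochhammer_mul, Polynomial.eval_mul,
    Polynomial.eval_comp, Polynomial.eval_add, Polynomial.eval_X, Polynomial.eval_natCast]

theorem factorial_mul_riseFac (n k : ℕ) :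
    (n.factorial : ℂ) * riseFac (n + 1) k = ((n + k).factorial : ℂ) := by
  rw [riseFac_eq_ascPochhammer_eval, factorial_mul_ascPochhammer]

theorem gaussHyp_comm (a b c w : ℂ) : gaussHyp a b c w = gaussHyp b a c w := by
  simp only [gaussHyp, mul_comm (riseFac a _)]

/-- The `k`-th term `uᵏ (x)ₖ / k!` of the binomial series `(1 - u)⁻ˣ`; with `u = -β` and
`u = -α` these are the matrix coefficients of `e^{βD}` and `e^{αU}` in the basis `v*`. -/
def binomialTerm (u x : ℂ) (k : ℕ) : ℂ := u ^ k / (k.factorial : ℂ) * riseFac x k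

theorem binomialTerm_add (u x : ℂ) (n k : ℕ) :
    binomialTerm u x (n + k) =
      binomialTerm u x n * (u ^ k * riseFac (x + n) k / riseFac (n + 1) k) := by
  simp only [binomialTerm, riseFac_add, ← factorial_mul_riseFac, pow_add]
  ring

theorem tsum_binomialTerm_mul_binomialTerm (u v x y : ℂ) (n : ℕ) :
    ∑' k : ℕ, binomialTerm u x (n + k) * binomialTerm v y k =
      binomialTerm u x n * gaussHyp (x + n) y (n + 1) (u * v) := by
  rw [gaussHyp, ← tsum_mul_left]
  refine tsum_congr fun k => ?_
  rw [binomialTerm_add]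
  simp only [binomialTerm]
  ring

theorem tsum_eq_tsum_add_of_eq_zero {M : Type*} [AddCommMonoid M] [TopologicalSpace M]
    {f : ℕ → M} {n : ℕ} (hf : ∀ s < n, f s = 0) : ∑' s, f s = ∑' k, f (n + k) := by
  refine ((add_right_injective n).tsum_eq fun s hs => ?_).symm
  obtain ⟨k, rfl⟩ := Nat.exists_eq_add_of_le (not_lt.mp fun hlt => hs (hf s hlt))
  exact ⟨k, rfl⟩

section MatrixCoefficient

variable (α β z z' : ℂ) (a : ℤ) (n : ℕ)

theorem mcoefStar_add_right_eq_tsum :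
    mcoefStar α β z z' a (a + n) =
      ∑' k : ℕ, binomialTerm (-β) (z' + a + 1) (n + k) * binomialTerm (-α) (z + a + n + 1) k := by
  rw [mcoefStar, tsum_eq_tsum_add_of_eq_zero (n := n) fun s hs => if_pos (by lia)]
  refine tsum_congr fun k => ?_
  have exponent : a - (a + n) + ((n + k : ℕ) : ℤ) = k := by lia
  rw [exponent, if_neg (by lia), Int.toNat_natCast, fallFac_eq_riseFac, mul_assoc,
    binomialTerm, binomialTerm]
  push_cast
  ring_nf

theorem mcoefStar_add_left_eq_tsum :
    mcoefStar α β z z' (a + n) a =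
      ∑' k : ℕ, binomialTerm (-α) (z + a + 1) (n + k) * binomialTerm (-β) (z' + a + n + 1) k := by
  rw [mcoefStar]
  refine tsum_congr fun k => ?_
  have exponent : a + n - a + (k : ℤ) = (n + k : ℕ) := by lia
  rw [exponent, if_neg (by lia), Int.toNat_natCast, fallFac_eq_riseFac, mul_assoc, mul_comm,
    binomialTerm, binomialTerm]
  push_cast
  ring_nf

theorem mcoefStar_add_right_eq_gaussHyp :
    mcoefStar α β z z' a (a + n) =
      binomialTerm (-β) (z' + a + 1) n *
        gaussHyp (z + a + n + 1) (z' + a + n + 1) (n + 1) (α * β) := by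
  rw [mcoefStar_add_right_eq_tsum, tsum_binomialTerm_mul_binomialTerm, gaussHyp_comm,
    neg_mul_neg, mul_comm β, add_right_comm (z' + a)]

theorem mcoefStar_add_left_eq_gaussHyp :
    mcoefStar α β z z' (a + n) a =
      binomialTerm (-α) (z + a + 1) n *
        gaussHyp (z + a + n + 1) (z' + a + n + 1) (n + 1) (α * β) := by
  rw [mcoefStar_add_left_eq_tsum, tsum_binomialTerm_mul_binomialTerm, neg_mul_neg,
    add_right_comm (z + a)]

end MatrixCoefficient

/-- For `|αβ| < 1` and half-integers `i = a + 1/2`, `j = b + 1/2`: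
if `i ≤ j` then
`⟨i|j⟩* = ((−β)^{j−i}/(j−i)!)(z'+i+1/2)_{j−i} F(z+j+1/2, z'+j+1/2; j−i+1; αβ)`,
and if `i ≥ j` then
`⟨i|j⟩* = ((−α)^{i−j}/(i−j)!)(z+j+1/2)_{i−j} F(z+i+1/2, z'+i+1/2; i−j+1; αβ)`. -/
theorem mcoefStar_eq_gaussHyp (α β z z' : ℂ) (h : ‖α * β‖ < 1) (a b : ℤ) :
    (a ≤ b → mcoefStar α β z z' a b =
      (-β) ^ (b - a).toNat / ((b - a).toNat.factorial : ℂ) *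
        riseFac (z' + ((a : ℂ) + 1/2) + 1/2) (b - a).toNat *
        gaussHyp (z + ((b : ℂ) + 1/2) + 1/2) (z' + ((b : ℂ) + 1/2) + 1/2)
          ((((b : ℂ) + 1/2) - ((a : ℂ) + 1/2)) + 1) (α * β)) ∧
    (b ≤ a → mcoefStar α β z z' a b =
      (-α) ^ (a - b).toNat / ((a - b).toNat.factorial : ℂ) *
        riseFac (z + ((b : ℂ) + 1/2) + 1/2) (a - b).toNat *
        gaussHyp (z + ((a : ℂ) + 1/2) + 1/2) (z' + ((a : ℂ) + 1/2) + 1/2)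
          ((((a : ℂ) + 1/2) - ((b : ℂ) + 1/2)) + 1) (α * β)) := by
  have add_two_halves (x : ℂ) : x + 1 / 2 + 1 / 2 = x + 1 := by ring
  have sub_half_integers (x y : ℂ) : (x + y + 1 / 2) - (x + 1 / 2) + 1 = y + 1 := by ring
  constructor <;> intro hle <;> obtain ⟨n, rfl⟩ := Int.le.dest hle
  · rw [mcoefStar_add_right_eq_gaussHyp, add_sub_cancel_left, Int.toNat_natCast, binomialTerm]
    simp only [Int.cast_add, Int.cast_natCast, add_two_halves, sub_half_integers, ← add_assoc]
  · rw [mcoefStar_add_left_eq_gaussHyp, add_sub_cancel_left, Int.toNat_natCast, binomialTerm]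
    simp only [Int.cast_add, Int.cast_natCast, add_two_halves, sub_half_integers, ← add_assoc]

end
end
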